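/- For every B > 0 and every complex-valued Schwartz function f on ℝ, one has ‖x²f‖ ≤ B⁻²‖−f'' + B²x²f‖ + √2·B⁻¹‖f‖, where x²f denotes the function x ↦ x²f(x) and f'' is the second derivative of f. -/

import Mathlib

open MeasureTheory

lemma aux_integrable (k : ℕ) (g h : SchwartzMap ℝ ℂ) :
    Integrable (fun x : ℝ => x ^ k * inner ℝ (g x) (h x)) volume := by
  have ht : Function.HasTemperateGrowth (fun x : ℝ => x ^ k) := by fun_prop
  have h1 := L2.integrable_inner (𝕜 := ℝ)
    ((SchwartzMap.smulLeftCLM ℂ (fun x : ℝ => x ^ k) g).toLp 2 volume) (h.toLp 2 volume)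
  refine h1.congr ?_
  filter_upwards [(SchwartzMap.smulLeftCLM ℂ (fun x : ℝ => x ^ k) g).coeFn_toLp 2 volume,
    h.coeFn_toLp 2 volume] with x hx1 hx2
  rw [hx1, hx2, SchwartzMap.smulLeftCLM_apply_apply ht, real_inner_smul_left]

lemma aux_norm (g : SchwartzMap ℝ ℂ) :
    (eLpNorm (fun x : ℝ => g x) 2 volume).toReal = Real.sqrt (∫ x, ‖g x‖ ^ 2) := by
  have := MemLp.eLpNorm_eq_integral_rpow_norm (by simp) (by simp) (g.memLp 2 volume)
  rw [this, ENNReal.toReal_ofReal (by positivity), Real.sqrt_eq_rpow]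
  simp

/-- For every B > 0 and every complex-valued Schwartz function f on ℝ,
‖x²f‖ ≤ B⁻²‖−f'' + B²x²f‖ + √2·B⁻¹‖f‖. -/
theorem stmt_2 (B : ℝ) (hB : 0 < B) (f : SchwartzMap ℝ ℂ) :
    (eLpNorm (fun x : ℝ => ((x ^ 2 : ℝ) : ℂ) * f x) 2 volume).toReal ≤
      B ^ (-2 : ℤ) * (eLpNorm (fun x : ℝ =>
          -(deriv (deriv f) x) + ((B ^ 2 * x ^ 2 : ℝ) : ℂ) * f x) 2 volume).toReal +
        Real.sqrt 2 * B⁻¹ * (eLpNorm (fun x : ℝ => f x) 2 volume).toReal := by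
  have ht : Function.HasTemperateGrowth (fun x : ℝ => x ^ 2) := by fun_prop
  set v : SchwartzMap ℝ ℂ := SchwartzMap.derivCLM ℝ ℂ f with hv
  set w : SchwartzMap ℝ ℂ := SchwartzMap.derivCLM ℝ ℂ v with hw
  set p : SchwartzMap ℝ ℂ := SchwartzMap.smulLeftCLM ℂ (fun x : ℝ => x ^ 2) f with hp
  set q : SchwartzMap ℝ ℂ := -w + B ^ 2 • p with hq
  have hvf : deriv f = v := by ext x; simp [hv]
  have hwv : deriv v = w := by ext x; simp [hw]
  have hpx : ∀ x, p x = x ^ 2 • f x := fun x => SchwartzMap.smulLeftCLM_apply_apply ht f x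
  have hqx : ∀ x, q x = -w x + (B ^ 2 * x ^ 2) • f x := fun x => by
    simp [hq, hpx, mul_assoc]
  have e1 : (fun x : ℝ => ((x ^ 2 : ℝ) : ℂ) * f x) = fun x => p x := by
    ext x; rw [hpx, Complex.real_smul]
  have e2 : (fun x : ℝ => -(deriv (deriv f) x) + ((B ^ 2 * x ^ 2 : ℝ) : ℂ) * f x)
      = fun x => q x := by
    ext x; rw [hqx, hvf, hwv, Complex.real_smul]
  rw [e1, e2, aux_norm, aux_norm, aux_norm]
  have df : ∀ x, HasDerivAt f (v x) x := fun x => by rw [← hvf]; exact f.hasDerivAt x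
  have dv : ∀ x, HasDerivAt v (w x) x := fun x => by rw [← hwv]; exact v.hasDerivAt x
  have key : ∫ x : ℝ, (x ^ 2 * inner ℝ (w x) (f x) + x ^ 2 * inner ℝ (v x) (v x)
      - x ^ 0 * inner ℝ (f x) (f x)) = 0 := by
    refine integral_eq_zero_of_hasDerivAt_of_integrable
      (f := fun x : ℝ => x ^ 2 * inner ℝ (v x) (f x) - x ^ 1 * inner ℝ (f x) (f x)) ?_
      (((aux_integrable 2 w f).add (aux_integrable 2 v v)).sub (aux_integrable 0 f f))
      ((aux_integrable 2 v f).sub (aux_integrable 1 f f))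
    intro x
    have h := (((hasDerivAt_id x).pow 2).mul ((dv x).inner ℝ (df x))).sub
      (((hasDerivAt_id x).pow 1).mul ((df x).inner ℝ (df x)))
    refine HasDerivAt.congr_deriv h ?_
    rw [real_inner_comm (v x) (f x)]
    simp only [Pi.pow_apply, id]
    push_cast
    ring
  have isq : ∀ g : SchwartzMap ℝ ℂ, Integrable (fun x => ‖g x‖ ^ 2) volume := fun g => by
    simpa using aux_integrable 0 g g
  have ik : Integrable (fun x : ℝ => x ^ 2 * inner ℝ (w x) (f x) + x ^ 2 * inner ℝ (v x) (v x)
      - x ^ 0 * inner ℝ (f x) (f x)) volume :=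
    (((aux_integrable 2 w f).add (aux_integrable 2 v v)).sub (aux_integrable 0 f f))
  have main : B ^ 4 * ∫ x, ‖p x‖ ^ 2 ≤ (∫ x, ‖q x‖ ^ 2) + 2 * B ^ 2 * ∫ x, ‖f x‖ ^ 2 := by
    have := integral_mono (μ := volume) ((isq p).const_mul (B ^ 4))
      (((isq q).add ((isq f).const_mul (2 * B ^ 2))).add (ik.const_mul (2 * B ^ 2))) (by
        intro x
        simp only [Pi.add_apply]
        rw [hqx, hpx, norm_add_sq_real, norm_smul, norm_smul, inner_neg_left,
          real_inner_smul_right, norm_neg, real_inner_self_eq_norm_sq, real_inner_self_eq_norm_sq]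
        simp only [Real.norm_eq_abs, mul_pow, sq_abs]
        have := sq_nonneg ‖w x‖
        have : 0 ≤ B ^ 2 * x ^ 2 * ‖v x‖ ^ 2 := by positivity
        nlinarith)
    rw [integral_add' ((isq q).add ((isq f).const_mul (2 * B ^ 2))) (ik.const_mul (2 * B ^ 2)),
      integral_add' (isq q) ((isq f).const_mul (2 * B ^ 2)), integral_const_mul,
      integral_const_mul, integral_const_mul, key] at this
    simpa using this
  have hP : 0 ≤ ∫ x, ‖p x‖ ^ 2 := integral_nonneg fun x => by positivity
  have hQ : 0 ≤ ∫ x, ‖q x‖ ^ 2 := integral_nonneg fun x => by positivity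
  have hF : 0 ≤ ∫ x, ‖f x‖ ^ 2 := integral_nonneg fun x => by positivity
  generalize (∫ x, ‖p x‖ ^ 2) = P at *
  generalize (∫ x, ‖q x‖ ^ 2) = Q at *
  generalize (∫ x, ‖f x‖ ^ 2) = F at *
  apply Real.sqrt_le_iff.2
  refine ⟨by positivity, ?_⟩
  have a := Real.sq_sqrt hQ
  have b := Real.sq_sqrt hF
  have c := Real.sq_sqrt (show (0:ℝ) ≤ 2 by norm_num)
  have d : P ≤ B⁻¹ ^ 4 * Q + 2 * B⁻¹ ^ 2 * F := by
    have : P = B⁻¹ ^ 4 * (B ^ 4 * P) := by field_simp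
    rw [this]
    calc _ ≤ B⁻¹ ^ 4 * (Q + 2 * B ^ 2 * F) := by gcongr
      _ = _ := by field_simp
  have e : B ^ (-2 : ℤ) = B⁻¹ ^ 2 := by rw [zpow_neg, inv_pow]; norm_cast
  rw [e]
  have hx : 0 ≤ 2 * (B⁻¹ ^ 2 * √Q) * (√2 * B⁻¹ * √F) := by positivity
  calc P ≤ B⁻¹ ^ 4 * Q + 2 * B⁻¹ ^ 2 * F := d
    _ = B⁻¹ ^ 4 * √Q ^ 2 + √2 ^ 2 * B⁻¹ ^ 2 * √F ^ 2 := by rw [a, b, c]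
    _ ≤ _ := by nlinarith
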